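/- With the coherence-optimal density f_Y(ξ) = P⁻¹ f(ξ) B(ξ)² and weight w(ξ) = √P · B(ξ)⁻¹ (on the set where B(ξ) ≠ 0), the coherence parameter μ = sup_ξ Σ_{j=1}^P |w(ξ) ψ_j(ξ)|² equals exactly P, and this is the minimum possible value of μ over all choices satisfying w(ξ)² f_Y(ξ) = f(ξ): for any probability density g on Ω with g > 0 where f B² > 0 and weight w = √(f/g), one has sup_ξ Σ_j |w(ξ)ψ_j(ξ)|² ≥ P. -/

import Mathlib

open MeasureTheory

/-! A supremum dominates every average. Averaged over the sampling density `g`, the pointwise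
coherence `w² B²` gives `∫ w² B² g = ∫ B² f = ∑ j, ∫ ψ j ² f`, which is the number of functions
whatever `g` is; the weight `√P / B` makes the pointwise coherence constant, so that the supremum
equals the average. -/

section PointwiseCoherence

variable {Ω ι : Type*} [Fintype ι]

/-- The squared envelope `B² = ∑ j, ψ j ²` of a finite family of functions. It is kept squared so
that no square root enters the integrals. -/
def envelopeSq (ψ : ι → Ω → ℝ) (x : Ω) : ℝ :=
  ∑ j, ψ j x ^ 2

/-- The pointwise coherence `∑ j, (w ψ j)²` of a finite family under the weight `w`. Its supremum
over `Ω` is the coherence parameter `μ`, which is handled below through its upper bounds because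
the supremum of an unbounded set of reals is `0`. -/
def coherenceAt (w : Ω → ℝ) (ψ : ι → Ω → ℝ) (x : Ω) : ℝ :=
  ∑ j, (w x * ψ j x) ^ 2

theorem envelopeSq_nonneg (ψ : ι → Ω → ℝ) (x : Ω) : 0 ≤ envelopeSq ψ x :=
  Finset.sum_nonneg fun _ _ => sq_nonneg _

theorem coherenceAt_eq_sq_mul_envelopeSq (w : Ω → ℝ) (ψ : ι → Ω → ℝ) (x : Ω) :
    coherenceAt w ψ x = w x ^ 2 * envelopeSq ψ x := by
  simp only [coherenceAt, envelopeSq, mul_pow, Finset.mul_sum]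

theorem coherenceAt_sqrt_div_envelopeSq {ψ : ι → Ω → ℝ} {c : ℝ} (hc : 0 ≤ c) {x : Ω}
    (hx : envelopeSq ψ x ≠ 0) :
    coherenceAt (fun y => √(c / envelopeSq ψ y)) ψ x = c := by
  rw [coherenceAt_eq_sq_mul_envelopeSq, Real.sq_sqrt (div_nonneg hc (envelopeSq_nonneg ψ x)),
    div_mul_cancel₀ c hx]

theorem coherenceAt_mul_eq_envelopeSq_mul {w f g : Ω → ℝ} {ψ : ι → Ω → ℝ} {x : Ω}
    (hw : envelopeSq ψ x ≠ 0 → w x ^ 2 * g x = f x) :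
    coherenceAt w ψ x * g x = envelopeSq ψ x * f x := by
  rw [coherenceAt_eq_sq_mul_envelopeSq]
  by_cases hB : envelopeSq ψ x = 0
  · simp only [hB, mul_zero, zero_mul]
  · rw [← hw hB]
    ring

end PointwiseCoherence

theorem sq_sqrt_div_mul_cancel {a b : ℝ} (ha : 0 ≤ a) (hb : 0 ≤ b) (hab : a ≠ 0 → b ≠ 0) :
    √(a / b) ^ 2 * b = a := by
  rw [Real.sq_sqrt (div_nonneg ha hb), div_mul_cancel_of_imp fun h => not_imp_not.1 hab h]

section Average

variable {Ω : Type*} [MeasurableSpace Ω] {m : Measure Ω}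

theorem integral_mul_le_const_mul_integral {h g : Ω → ℝ} {C : ℝ} (hg : 0 ≤ᵐ[m] g)
    (hgi : Integrable g m) (hhg : Integrable (fun x => h x * g x) m) (hC : ∀ᵐ x ∂m, h x ≤ C) :
    ∫ x, h x * g x ∂m ≤ C * ∫ x, g x ∂m := by
  rw [← integral_const_mul]
  refine integral_mono_ae hhg (hgi.const_mul C) ?_
  filter_upwards [hg, hC] with x hgx hCx
  exact mul_le_mul_of_nonneg_right hCx hgx

variable {ι : Type*} [Fintype ι] {ψ : ι → Ω → ℝ} {f g w : Ω → ℝ}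

theorem integrable_envelopeSq_mul (hψ : ∀ j, Integrable (fun x => ψ j x ^ 2 * f x) m) :
    Integrable (fun x => envelopeSq ψ x * f x) m := by
  simp only [envelopeSq, Finset.sum_mul]
  exact integrable_finsetSum _ fun j _ => hψ j

theorem integral_envelopeSq_mul (hψ : ∀ j, Integrable (fun x => ψ j x ^ 2 * f x) m) :
    ∫ x, envelopeSq ψ x * f x ∂m = ∑ j, ∫ x, ψ j x ^ 2 * f x ∂m := by
  simp only [envelopeSq, Finset.sum_mul]
  exact integral_finsetSum _ fun j _ => hψ j

theorem sum_integral_le_of_coherenceAt_le {C : ℝ} (hg : 0 ≤ᵐ[m] g) (hgint : ∫ x, g x ∂m = 1)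
    (hψ : ∀ j, Integrable (fun x => ψ j x ^ 2 * f x) m)
    (hw : ∀ᵐ x ∂m, envelopeSq ψ x ≠ 0 → w x ^ 2 * g x = f x)
    (hC : ∀ᵐ x ∂m, coherenceAt w ψ x ≤ C) :
    ∑ j, ∫ x, ψ j x ^ 2 * f x ∂m ≤ C := by
  have hgi : Integrable g m := .of_integral_ne_zero (hgint ▸ one_ne_zero)
  have hcoh : (fun x => coherenceAt w ψ x * g x) =ᵐ[m] fun x => envelopeSq ψ x * f x :=
    hw.mono fun _ => coherenceAt_mul_eq_envelopeSq_mul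
  calc ∑ j, ∫ x, ψ j x ^ 2 * f x ∂m
      = ∫ x, envelopeSq ψ x * f x ∂m := (integral_envelopeSq_mul hψ).symm
    _ = ∫ x, coherenceAt w ψ x * g x ∂m := (integral_congr_ae hcoh).symm
    _ ≤ C * ∫ x, g x ∂m := integral_mul_le_const_mul_integral hg hgi
        ((integrable_envelopeSq_mul hψ).congr hcoh.symm) hC
    _ = C := by rw [hgint, mul_one]

end Average

theorem stmt14_general {Ω ι : Type*} [MeasurableSpace Ω] [Fintype ι] {m : Measure Ω}
    {ψ : ι → Ω → ℝ} {f g w : Ω → ℝ} (hg : 0 ≤ᵐ[m] g) (hgint : ∫ x, g x ∂m = 1)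
    (hnorm : ∀ j, ∫ x, ψ j x ^ 2 * f x ∂m = 1)
    (hw : ∀ᵐ x ∂m, envelopeSq ψ x ≠ 0 → w x ^ 2 * g x = f x) :
    (∀ C : ℝ, (∀ᵐ x ∂m, coherenceAt w ψ x ≤ C) → (Fintype.card ι : ℝ) ≤ C) ∧
      ∀ x, envelopeSq ψ x ≠ 0 →
        coherenceAt (fun y => √(Fintype.card ι / envelopeSq ψ y)) ψ x = Fintype.card ι := by
  refine ⟨fun C hC => ?_, fun x => coherenceAt_sqrt_div_envelopeSq (Nat.cast_nonneg _)⟩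
  have hψ (j : ι) : Integrable (fun x => ψ j x ^ 2 * f x) m :=
    .of_integral_ne_zero (hnorm j ▸ one_ne_zero)
  simpa [hnorm] using sum_integral_le_of_coherenceAt_le hg hgint hψ hw hC

theorem stmt14 {Ω : Type*} [MeasurableSpace Ω] (m : Measure Ω)
    {P : ℕ} (hP : 0 < P) (ψ : Fin P → Ω → ℝ) (f g : Ω → ℝ)
    (hf : ∀ x, 0 ≤ f x) (hg : ∀ x, 0 ≤ g x)
    (hfint : ∫ x, f x ∂m = 1) (hgint : ∫ x, g x ∂m = 1)
    (hint : ∀ i j, Integrable (fun x => ψ i x * ψ j x * f x) m)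
    (horth : ∀ i j, ∫ x, ψ i x * ψ j x * f x ∂m = if i = j then 1 else 0)
    (hpos : ∀ x, f x * (∑ j, (ψ j x) ^ 2) ≠ 0 → 0 < g x) :
    (∀ C : ℝ, (∀ x, ∑ j, (Real.sqrt (f x / g x) * ψ j x) ^ 2 ≤ C) → (P : ℝ) ≤ C) ∧
      (∀ x, (∑ j, (ψ j x) ^ 2) ≠ 0 →
        ∑ j, (Real.sqrt ((P : ℝ) / ∑ k, (ψ k x) ^ 2) * ψ j x) ^ 2 = P) := by
  have hnorm (j : Fin P) : ∫ x, ψ j x ^ 2 * f x ∂m = 1 := by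
    simpa only [sq, if_true] using horth j j
  have hweight (x : Ω) (hB : envelopeSq ψ x ≠ 0) : √(f x / g x) ^ 2 * g x = f x :=
    sq_sqrt_div_mul_cancel (hf x) (hg x) fun hfx => (hpos x (mul_ne_zero hfx hB)).ne'
  have ⟨lower, attained⟩ := stmt14_general (.of_forall hg) hgint hnorm (.of_forall hweight)
  rw [Fintype.card_fin] at lower attained
  exact ⟨fun C hC => lower C (.of_forall hC), attained⟩
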